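/- arXiv:1212.0527 — 2 statements merged into one kernel-verified Lean document; each statement's English description precedes it below -/
import Mathlib

section
/- Let P(u,Γ) be a generalised Markov kernel on a compact metric space X satisfying the uniform Feller property (with determining family 𝒞 ⊆ C₊(X) of non-zero functions containing 𝟏) and the uniform irreducibility property, and suppose μ ∈ 𝒫(X) satisfies 𝔓*μ = μ. Then there exists a function h ∈ C(X) with h(u) > 0 for every u ∈ X, 𝔓h = h, and ⟨h,μ⟩ = 1; moreover h can be obtained as a uniform limit point of the Cesàro averages k⁻¹ Σ_{l=0}^{k−1} 𝔓_l f for any fixed f ∈ 𝒞, suitably normalized. -/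
open MeasureTheory Filter Topology
open scoped ENNReal NNReal

noncomputable section

variable {X : Type} [MetricSpace X] [CompactSpace X] [MeasurableSpace X] [BorelSpace X]

/-- The operator `𝔓 f (u) = ∫ f dP(u,·)` associated with a (generalised Markov) kernel. -/
def opP (P : X → FiniteMeasure X) (f : X → ℝ) (u : X) : ℝ :=
  ∫ v, f v ∂(P u : Measure X)

/-- Iterates `𝔓_k = 𝔓^k`. -/
def opIter (P : X → FiniteMeasure X) : ℕ → (X → ℝ) → X → ℝ
  | 0 => fun f => f
  | k + 1 => fun f => opP P (opIter P k f)

/-- Iterated kernels `P_k(u,·)`, `P_0(u,·) = δ_u`, `P_k(u,·) = ∫ P_{k-1}(u,dv) P(v,·)`. -/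
def kIter (P : X → FiniteMeasure X) : ℕ → X → Measure X
  | 0 => fun u => Measure.dirac u
  | k + 1 => fun u => (kIter P k u).bind fun v => (P v : Measure X)

/-- Iterates of the dual operator `𝔓* ν (Γ) = ∫ P(u,Γ) ν(du)`. -/
def dualIter (P : X → FiniteMeasure X) : ℕ → Measure X → Measure X
  | 0 => fun ν => ν
  | k + 1 => fun ν => (dualIter P k ν).bind fun v => (P v : Measure X)

/-- sup-norm of a function on `X`. -/
def supN (g : X → ℝ) : ℝ := ⨆ x, |g x|

/-- A determining family: two finite non-negative Borel measures assigning equal integrals to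
all members coincide. -/
def Determining (C : Set (X → ℝ)) : Prop :=
  ∀ μ ν : Measure X, IsFiniteMeasure μ → IsFiniteMeasure ν →
    (∀ f ∈ C, ∫ x, f x ∂μ = ∫ x, f x ∂ν) → μ = ν

/-- Uniform irreducibility of a generalised Markov kernel. -/
def UnifIrred (P : X → FiniteMeasure X) : Prop :=
  ∀ r : ℝ, 0 < r → ∃ m : ℕ, 1 ≤ m ∧ ∃ p : ℝ, 0 < p ∧
    ∀ u v : X, ENNReal.ofReal p ≤ kIter P m u (Metric.closedBall v r)

/-- Uniform Feller property of a generalised Markov kernel with respect to a class `C`. -/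
def UnifFeller (P : X → FiniteMeasure X) (C : Set (X → ℝ)) : Prop :=
  ∀ f ∈ C, UniformEquicontinuous fun (k : ℕ) (u : X) =>
    (supN (opIter P k f))⁻¹ * opIter P k f u


set_option linter.unusedSectionVars false

lemma meas_P (P : X → FiniteMeasure X) (hP : Continuous P) :
    Measurable (fun v => (P v : Measure X)) := by
  have key : ∀ s : Set X, IsClosed s → Measurable fun a => (P a : Measure X) s := by
    intro s hs
    have hpos : ∀ n : ℕ, (0 : ℝ) < 1 / ((n : ℝ) + 1) := fun n => by positivity
    refine measurable_of_tendsto_metrizable (f := fun (n : ℕ) (a : X) =>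
      ∫⁻ x, (thickenedIndicator (hpos n) s x : ℝ≥0∞) ∂(P a : Measure X)) ?_ ?_
    · intro n
      exact ((FiniteMeasure.continuous_lintegral_boundedContinuousFunction
        (thickenedIndicator (hpos n) s)).comp hP).measurable
    · rw [tendsto_pi_nhds]
      intro a
      exact tendsto_lintegral_thickenedIndicator_of_isClosed _ hs hpos
        tendsto_one_div_add_atTop_nhds_zero_nat
  refine Measurable.measure_of_isPiSystem (S := {s : Set X | IsClosed s}) ?_ isPiSystem_isClosed
    (fun s hs => key s hs) (key _ isClosed_univ)
  rw [BorelSpace.measurable_eq (α := X), borel_eq_generateFrom_isClosed]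

lemma bind_fin (P : X → FiniteMeasure X) (hP : Continuous P) (ν : Measure X) [IsFiniteMeasure ν] :
    IsFiniteMeasure (ν.bind fun v => (P v : Measure X)) := by
  have hm := meas_P P hP
  have hc : Continuous fun v => (P v).mass := FiniteMeasure.continuous_mass.comp hP
  obtain ⟨M, hM⟩ := (isCompact_range hc).bddAbove
  constructor
  rw [Measure.bind_apply MeasurableSet.univ hm.aemeasurable]
  calc ∫⁻ a, (P a : Measure X) Set.univ ∂ν ≤ ∫⁻ a, (M : ℝ≥0∞) ∂ν := by
        refine lintegral_mono fun a => ?_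
        rw [← FiniteMeasure.ennreal_mass]
        exact ENNReal.coe_le_coe.2 (hM ⟨a, rfl⟩)
    _ < ⊤ := by
        rw [lintegral_const]
        exact ENNReal.mul_lt_top ENNReal.coe_lt_top (measure_lt_top _ _)

lemma integrable_cont (ν : Measure X) [IsFiniteMeasure ν] {g : X → ℝ} (hg : Continuous g) :
    Integrable g ν :=
  hg.integrable_of_hasCompactSupport (HasCompactSupport.of_compactSpace g)

lemma opP_cont (P : X → FiniteMeasure X) (hP : Continuous P) {g : X → ℝ} (hg : Continuous g) :
    Continuous (opP P g) :=
  (FiniteMeasure.continuous_integral_boundedContinuousFunction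
    (BoundedContinuousFunction.mkOfCompact ⟨g, hg⟩)).comp hP

lemma opIter_cont (P : X → FiniteMeasure X) (hP : Continuous P) {g : X → ℝ} (hg : Continuous g)
    (k : ℕ) : Continuous (opIter P k g) := by
  induction k with
  | zero => exact hg
  | succ k ih => exact opP_cont P hP ih

lemma integral_bind_P (P : X → FiniteMeasure X) (hP : Continuous P) (ν : Measure X)
    [IsFiniteMeasure ν] {g : X → ℝ} (hg : Continuous g) :
    ∫ x, g x ∂(ν.bind fun v => (P v : Measure X)) = ∫ x, opP P g x ∂ν := by
  let κ : ProbabilityTheory.Kernel X X := ⟨fun v => (P v : Measure X), meas_P P hP⟩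
  have h0 : (ν.bind fun v => (P v : Measure X)) =
      (ProbabilityTheory.Kernel.comp κ (ProbabilityTheory.Kernel.const Unit ν)) () := by
    rw [← Measure.comp_eq_comp_const_apply]; rfl
  have hf := bind_fin P hP ν
  rw [h0] at hf ⊢
  rw [ProbabilityTheory.Kernel.integral_comp (integrable_cont _ hg)]
  rfl

lemma opIter_succ' (P : X → FiniteMeasure X) (k : ℕ) (g : X → ℝ) :
    opIter P (k + 1) g = opIter P k (opP P g) := by
  induction k with
  | zero => rfl
  | succ k ih =>
    change opP P (opIter P (k + 1) g) = opP P (opIter P k (opP P g))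
    rw [ih]

lemma opIter_add (P : X → FiniteMeasure X) (m k : ℕ) (g : X → ℝ) :
    opIter P (m + k) g = opIter P m (opIter P k g) := by
  induction m with
  | zero => simp [opIter]
  | succ m ih =>
    rw [show m + 1 + k = (m + k) + 1 by ring]
    change opP P (opIter P (m + k) g) = opP P (opIter P m (opIter P k g))
    rw [ih]

lemma kIter_fin (P : X → FiniteMeasure X) (hP : Continuous P) (k : ℕ) (u : X) :
    IsFiniteMeasure (kIter P k u) := by
  induction k with
  | zero => change IsFiniteMeasure (Measure.dirac u); infer_instance
  | succ k ih => exact bind_fin P hP _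

lemma integral_kIter (P : X → FiniteMeasure X) (hP : Continuous P) (k : ℕ) (u : X) {g : X → ℝ}
    (hg : Continuous g) : ∫ x, g x ∂(kIter P k u) = opIter P k g u := by
  induction k generalizing g with
  | zero => exact integral_dirac g u
  | succ k ih =>
    have := kIter_fin P hP k u
    rw [opIter_succ', ← ih (opP_cont P hP hg)]
    exact integral_bind_P P hP _ hg

/-- Lower bound from irreducibility. -/
lemma lower_bd (P : X → FiniteMeasure X) (hP : Continuous P) {m : ℕ} {u v : X} {p r a : ℝ}
    (hp : 0 < p) (h : ENNReal.ofReal p ≤ kIter P m u (Metric.closedBall v r))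
    {g : X → ℝ} (hg : Continuous g) (hg0 : ∀ x, 0 ≤ g x) (ha : 0 ≤ a)
    (hga : ∀ x ∈ Metric.closedBall v r, a ≤ g x) : p * a ≤ opIter P m g u := by
  have := kIter_fin P hP m u
  rw [← integral_kIter P hP m u hg]
  have hs : MeasurableSet (Metric.closedBall v r) := Metric.isClosed_closedBall.measurableSet
  have h1 : p ≤ (kIter P m u).real (Metric.closedBall v r) :=
    (ENNReal.ofReal_le_iff_le_toReal (measure_ne_top _ _)).1 h
  calc p * a ≤ (kIter P m u).real (Metric.closedBall v r) * a :=
        mul_le_mul_of_nonneg_right h1 ha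
    _ = ∫ x in Metric.closedBall v r, a ∂(kIter P m u) := by
        rw [setIntegral_const, smul_eq_mul]
    _ ≤ ∫ x in Metric.closedBall v r, g x ∂(kIter P m u) :=
        setIntegral_mono_on (integrable_const a) (integrable_cont _ hg).integrableOn hs hga
    _ ≤ ∫ x, g x ∂(kIter P m u) :=
        setIntegral_le_integral (integrable_cont _ hg) (Eventually.of_forall hg0)

lemma opIter_fix (P : X → FiniteMeasure X) {g : X → ℝ} (h : ∀ u, opP P g u = g u) (m : ℕ) :
    opIter P m g = g := by
  induction m with
  | zero => rfl
  | succ m ih => change opP P (opIter P m g) = g; rw [ih]; exact funext h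

lemma strict_pos (P : X → FiniteMeasure X) (hP : Continuous P) (hUI : UnifIrred P)
    {g : X → ℝ} (hg : Continuous g) (hg0 : ∀ x, 0 ≤ g x) (h : ∀ u, opP P g u = g u)
    {v : X} (hv : 0 < g v) (u : X) : 0 < g u := by
  have hn : ∀ᶠ x in 𝓝 v, g v / 2 < g x :=
    hg.continuousAt.eventually (lt_mem_nhds (half_lt_self hv))
  obtain ⟨r, hr, hb⟩ := Metric.nhds_basis_closedBall.eventually_iff.1 hn
  obtain ⟨m, -, p, hp, hmp⟩ := hUI r hr
  have := lower_bd P hP hp (hmp u v) hg hg0 (a := g v / 2) (by positivity)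
    (fun x hx => (hb hx).le)
  rw [opIter_fix P h] at this
  exact lt_of_lt_of_le (by positivity) this

lemma uniq (P : X → FiniteMeasure X) (hP : Continuous P) (hUI : UnifIrred P)
    (μ : ProbabilityMeasure X) {g h : X → ℝ} (hg : Continuous g) (hh : Continuous h)
    (hhp : ∀ x, 0 < h x)
    (hgf : ∀ u, opP P g u = g u) (hhf : ∀ u, opP P h u = h u)
    (hgi : ∫ x, g x ∂(μ : Measure X) = 1) (hhi : ∫ x, h x ∂(μ : Measure X) = 1) : g = h := by
  have hne : Nonempty X := nonempty_of_isProbabilityMeasure (μ : Measure X)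
  have hq : Continuous fun x => g x / h x := hg.div hh (fun x => (hhp x).ne')
  obtain ⟨u0, -, hu0⟩ := isCompact_univ.exists_isMinOn Set.univ_nonempty hq.continuousOn
  set t := g u0 / h u0 with ht
  have ht' : ∀ x, t * h x ≤ g x := fun x => by
    have := hu0 (Set.mem_univ x)
    exact (le_div_iff₀ (hhp x)).1 this
  have hd : Continuous fun x => g x - t * h x := hg.sub (continuous_const.mul hh)
  have hfix : ∀ u, opP P (fun x => g x - t * h x) u = g u - t * h u := by
    intro u
    unfold opP
    rw [integral_sub (integrable_cont _ hg) ((integrable_cont _ hh).const_mul t),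
      integral_const_mul]
    have h1 := hgf u
    have h2 := hhf u
    unfold opP at h1 h2
    rw [h1, h2]
  have hz : ∀ x, g x = t * h x := by
    intro x
    by_contra hne
    have hlt : 0 < g x - t * h x := sub_pos.2 (lt_of_le_of_ne (ht' x) (Ne.symm hne))
    have := strict_pos P hP hUI hd (fun x => sub_nonneg.2 (ht' x)) hfix hlt u0
    have h3 : g u0 = t * h u0 := by rw [ht, div_mul_cancel₀ _ (hhp u0).ne']
    simp only [h3, sub_self, lt_irrefl] at this
  have ht1 : t = 1 := by
    have : ∫ x, g x ∂(μ : Measure X) = t * ∫ x, h x ∂(μ : Measure X) := by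
      rw [← integral_const_mul]; exact integral_congr_ae (Eventually.of_forall hz)
    rw [hgi, hhi] at this; linarith
  funext x; rw [hz x, ht1, one_mul]

lemma opIter_nonneg (P : X → FiniteMeasure X) {f : X → ℝ} (hf : ∀ x, 0 ≤ f x) (k : ℕ) (u : X) :
    0 ≤ opIter P k f u := by
  induction k generalizing u with
  | zero => exact hf u
  | succ k ih => exact integral_nonneg fun v => ih v

lemma integral_opIter (P : X → FiniteMeasure X) (hP : Continuous P) (μ : ProbabilityMeasure X)
    (hstat : (μ : Measure X).bind (fun v => (P v : Measure X)) = (μ : Measure X))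
    {f : X → ℝ} (hf : Continuous f) (k : ℕ) :
    ∫ x, opIter P k f x ∂(μ : Measure X) = ∫ x, f x ∂(μ : Measure X) := by
  induction k with
  | zero => rfl
  | succ k ih =>
    rw [← ih]
    have := integral_bind_P P hP (μ : Measure X) (opIter_cont P hP hf k)
    rw [hstat] at this
    exact this.symm

lemma supN_spec [Nonempty X] {g : X → ℝ} (hg : Continuous g) (hg0 : ∀ x, 0 ≤ g x) :
    (∃ x, g x = supN g) ∧ ∀ y, g y ≤ supN g := by
  obtain ⟨x, -, hx⟩ := isCompact_univ.exists_isMaxOn Set.univ_nonempty hg.continuousOn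
  have hx' : ∀ y, g y ≤ g x := fun y => hx (Set.mem_univ y)
  have : supN g = g x := by
    unfold supN
    apply le_antisymm
    · exact ciSup_le fun y => by rw [abs_of_nonneg (hg0 y)]; exact hx' y
    · refine (le_abs_self (g x)).trans (le_ciSup (f := fun y => |g y|) ⟨g x, ?_⟩ x)
      rintro _ ⟨y, rfl⟩
      simp only [abs_of_nonneg (hg0 y)]; exact hx' y
  exact ⟨⟨x, this.symm⟩, fun y => by rw [this]; exact hx' y⟩

lemma unif_bound (P : X → FiniteMeasure X) (hP : Continuous P) (hUI : UnifIrred P)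
    (μ : ProbabilityMeasure X)
    (hstat : (μ : Measure X).bind (fun v => (P v : Measure X)) = (μ : Measure X))
    {f : X → ℝ} (hf : Continuous f) (hf0 : ∀ x, 0 ≤ f x)
    (hI : 0 < ∫ x, f x ∂(μ : Measure X))
    (hE : UniformEquicontinuous fun (k : ℕ) (u : X) =>
      (supN (opIter P k f))⁻¹ * opIter P k f u) :
    ∃ M : ℝ, 0 < M ∧ ∀ k, 0 < supN (opIter P k f) ∧ supN (opIter P k f) ≤ M := by
  have hne : Nonempty X := nonempty_of_isProbabilityMeasure (μ : Measure X)
  rw [Metric.uniformEquicontinuous_iff] at hE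
  obtain ⟨δ, hδ, hE⟩ := hE (1 / 2) (by norm_num)
  obtain ⟨m, -, p, hp, hmp⟩ := hUI (δ / 2) (by positivity)
  refine ⟨2 * (∫ x, f x ∂(μ : Measure X)) / p, by positivity, fun k => ?_⟩
  have hc := opIter_cont P hP hf k
  have h0 := opIter_nonneg P hf0 k
  obtain ⟨⟨x, hx⟩, hle⟩ := supN_spec hc h0
  have hIk := integral_opIter P hP μ hstat hf k
  have hpos : 0 < supN (opIter P k f) := by
    refine lt_of_lt_of_le hI ?_
    rw [← hIk]
    calc ∫ x, opIter P k f x ∂(μ : Measure X) ≤ ∫ x, supN (opIter P k f) ∂(μ : Measure X) :=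
          integral_mono (integrable_cont _ hc) (integrable_const _) hle
      _ = supN (opIter P k f) := by simp
  refine ⟨hpos, ?_⟩
  set N := supN (opIter P k f) with hN
  have hball : ∀ y ∈ Metric.closedBall x (δ / 2), N / 2 ≤ opIter P k f y := by
    intro y hy
    have h1 := hE y x (lt_of_le_of_lt (Metric.mem_closedBall.1 hy) (half_lt_self hδ)) k
    simp only [← hN] at h1
    rw [hx, inv_mul_cancel₀ hpos.ne', Real.dist_eq, abs_lt] at h1
    have h2 : 1 / 2 ≤ N⁻¹ * opIter P k f y := by linarith [h1.1]
    rw [inv_mul_eq_div, le_div_iff₀ hpos] at h2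
    linarith
  have hlow : ∀ u, p * (N / 2) ≤ opIter P (m + k) f u := by
    intro u
    rw [opIter_add]
    exact lower_bd P hP hp (hmp u x) hc h0 (by positivity) hball
  have : p * (N / 2) ≤ ∫ x, f x ∂(μ : Measure X) := by
    rw [← integral_opIter P hP μ hstat hf (m + k)]
    calc p * (N / 2) = ∫ x, p * (N / 2) ∂(μ : Measure X) := by simp
      _ ≤ _ := integral_mono (integrable_const _)
        (integrable_cont _ (opIter_cont P hP hf (m + k))) hlow
  rw [le_div_iff₀ hp]
  linarith

lemma avg_lim (P : X → FiniteMeasure X) (hP : Continuous P) (hUI : UnifIrred P)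
    (μ : ProbabilityMeasure X)
    (hstat : (μ : Measure X).bind (fun v => (P v : Measure X)) = (μ : Measure X))
    {f : X → ℝ} (hf : Continuous f) (hf0 : ∀ x, 0 ≤ f x)
    (hI : 0 < ∫ x, f x ∂(μ : Measure X))
    (hE : UniformEquicontinuous fun (k : ℕ) (u : X) =>
      (supN (opIter P k f))⁻¹ * opIter P k f u) :
    ∃ h : X → ℝ, Continuous h ∧ (∀ x, 0 ≤ h x) ∧ (∀ u, opP P h u = h u) ∧
      (∫ x, h x ∂(μ : Measure X)) = ∫ x, f x ∂(μ : Measure X) ∧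
      ∃ φ : ℕ → ℕ, StrictMono φ ∧ (∀ j, 1 ≤ φ j) ∧
        TendstoUniformly
          (fun (j : ℕ) (u : X) => (φ j : ℝ)⁻¹ * ∑ l ∈ Finset.range (φ j), opIter P l f u)
          h atTop := by
  have hne : Nonempty X := nonempty_of_isProbabilityMeasure (μ : Measure X)
  obtain ⟨M, hM, hNM⟩ := unif_bound P hP hUI μ hstat hf hf0 hI hE
  have hF0 : ∀ k u, 0 ≤ opIter P k f u := opIter_nonneg P hf0
  have hFc : ∀ k, Continuous (opIter P k f) := opIter_cont P hP hf
  have hFM : ∀ k u, opIter P k f u ≤ M := fun k u =>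
    ((supN_spec (hFc k) (hF0 k)).2 u).trans (hNM k).2
  set A : ℕ → X → ℝ := fun n u => ((n + 1 : ℕ) : ℝ)⁻¹ * ∑ l ∈ Finset.range (n + 1), opIter P l f u
    with hA
  have hAc : ∀ n, Continuous (A n) := fun n =>
    continuous_const.mul (continuous_finsetSum _ fun l _ => hFc l)
  have hA0 : ∀ n u, 0 ≤ A n u := fun n u =>
    mul_nonneg (by positivity) (Finset.sum_nonneg fun l _ => hF0 l u)
  have hAM : ∀ n u, A n u ≤ M := by
    intro n u
    have : ∑ l ∈ Finset.range (n + 1), opIter P l f u ≤ ((n + 1 : ℕ) : ℝ) * M := by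
      calc _ ≤ ∑ l ∈ Finset.range (n + 1), M := Finset.sum_le_sum fun l _ => hFM l u
        _ = _ := by simp
    simp only [hA]
    rw [inv_mul_le_iff₀ (by positivity)]
    exact this
  have hAE : UniformEquicontinuous A := by
    rw [Metric.uniformEquicontinuous_iff] at hE ⊢
    intro ε hε
    obtain ⟨δ, hδ, hE⟩ := hE (ε / 2 / M) (by positivity)
    refine ⟨δ, hδ, fun x y hxy n => ?_⟩
    have h1 : ∀ k, |opIter P k f x - opIter P k f y| ≤ ε / 2 := by
      intro k
      have h2 := hE x y hxy k
      simp only [Real.dist_eq] at h2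
      obtain ⟨hp, hl⟩ := hNM k
      rw [← mul_sub, abs_mul, abs_of_pos (inv_pos.2 hp), inv_mul_eq_div, div_lt_iff₀ hp] at h2
      calc _ ≤ _ := h2.le
        _ ≤ ε / 2 / M * M := by gcongr
        _ = ε / 2 := by field_simp
    have h3 : |∑ l ∈ Finset.range (n + 1), opIter P l f x -
        ∑ l ∈ Finset.range (n + 1), opIter P l f y| ≤ ((n + 1 : ℕ) : ℝ) * (ε / 2) := by
      rw [← Finset.sum_sub_distrib]
      calc _ ≤ ∑ l ∈ Finset.range (n + 1), |opIter P l f x - opIter P l f y| :=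
            Finset.abs_sum_le_sum_abs _ _
        _ ≤ ∑ l ∈ Finset.range (n + 1), ε / 2 := Finset.sum_le_sum fun l _ => h1 l
        _ = _ := by simp
    have hn : (0 : ℝ) < ((n + 1 : ℕ) : ℝ) := by positivity
    simp only [hA, Real.dist_eq]
    rw [← mul_sub, abs_mul, abs_of_pos (inv_pos.2 hn)]
    refine lt_of_le_of_lt ?_ (half_lt_self hε)
    rw [inv_mul_le_iff₀ hn]
    exact h3
  let B : ℕ → BoundedContinuousFunction X ℝ := fun n =>
    BoundedContinuousFunction.mkOfCompact ⟨A n, hAc n⟩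
  have hBA : ∀ n x, B n x = A n x := fun n x => rfl
  have hcomp : IsCompact (closure (Set.range B)) := by
    refine BoundedContinuousFunction.arzela_ascoli (Set.Icc 0 M) isCompact_Icc _ ?_ ?_
    · rintro _ x ⟨n, rfl⟩
      exact ⟨hA0 n x, hAM n x⟩
    · intro x U hU
      filter_upwards [hAE.equicontinuous x U hU] with y hy
      rintro ⟨_, ⟨n, rfl⟩⟩
      exact hy n
  obtain ⟨h, -, ψ, hψ, hlim⟩ := hcomp.tendsto_subseq (x := B)
    (fun n => subset_closure ⟨n, rfl⟩)
  have hunif : TendstoUniformly (fun j u => A (ψ j) u) h atTop :=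
    BoundedContinuousFunction.tendsto_iff_tendstoUniformly.1 hlim
  have hpt : ∀ u, Tendsto (fun j => A (ψ j) u) atTop (𝓝 (h u)) := fun u => hunif.tendsto_at u
  have hint : ∀ ν : Measure X, IsFiniteMeasure ν →
      Tendsto (fun j => ∫ x, A (ψ j) x ∂ν) atTop (𝓝 (∫ x, h x ∂ν)) := by
    intro ν hν
    refine tendsto_integral_of_dominated_convergence (fun _ => M)
      (fun j => (hAc _).aestronglyMeasurable) (integrable_const M) (fun j => ?_) ?_
    · refine Eventually.of_forall fun x => ?_
      rw [Real.norm_eq_abs, abs_of_nonneg (hA0 _ x)]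
      exact hAM _ x
    · exact Eventually.of_forall hpt
  have hAint : ∀ ν : Measure X, IsFiniteMeasure ν → ∀ n, ∫ x, A n x ∂ν =
      ((n + 1 : ℕ) : ℝ)⁻¹ * ∑ l ∈ Finset.range (n + 1), ∫ x, opIter P l f x ∂ν := by
    intro ν hν n
    simp only [hA]
    rw [integral_const_mul, integral_finsetSum _ fun l _ => integrable_cont _ (hFc l)]
  refine ⟨h, h.continuous, fun x => ge_of_tendsto' (hpt x) fun j => hA0 _ x, fun u => ?_, ?_,
    fun j => ψ j + 1, fun a b hab => Nat.add_lt_add_right (hψ hab) 1,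
    fun j => Nat.le_add_left 1 _, hunif⟩
  · have h1 := hint (P u : Measure X) inferInstance
    have h2 : Tendsto (fun j => ∫ x, A (ψ j) x ∂(P u : Measure X) - A (ψ j) u) atTop (𝓝 0) := by
      have h3 : Tendsto (fun n : ℕ => ((n + 1 : ℕ) : ℝ)⁻¹ * M) atTop (𝓝 0) := by
        have := (tendsto_one_div_add_atTop_nhds_zero_nat (𝕜 := ℝ)).mul_const M
        simpa using this
      refine squeeze_zero_norm (fun j => ?_) (h3.comp hψ.tendsto_atTop)
      rw [hAint _ inferInstance]
      simp only [hA, Function.comp]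
      rw [← mul_sub, ← Finset.sum_sub_distrib]
      have h4 : ∑ l ∈ Finset.range (ψ j + 1),
          (∫ x, opIter P l f x ∂(P u : Measure X) - opIter P l f u) =
          opIter P (ψ j + 1) f u - opIter P 0 f u :=
        Finset.sum_range_sub (fun l => opIter P l f u) (ψ j + 1)
      rw [h4, norm_mul, Real.norm_eq_abs, Real.norm_eq_abs, abs_of_nonneg (by positivity)]
      gcongr
      rw [abs_le]
      constructor <;> linarith [hF0 (ψ j + 1) u, hFM (ψ j + 1) u, hF0 0 u, hFM 0 u]
    have h5 := tendsto_nhds_unique h2 (h1.sub (hpt u))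
    change ∫ x, h x ∂(P u : Measure X) = h u
    linarith
  · have h1 := hint (μ : Measure X) inferInstance
    refine tendsto_nhds_unique h1 ?_
    refine tendsto_const_nhds.congr fun j => ?_
    rw [hAint _ inferInstance]
    simp only [integral_opIter P hP μ hstat hf]
    rw [Finset.sum_const, Finset.card_range, nsmul_eq_mul, inv_mul_cancel_left₀]
    positivity

lemma normalized (P : X → FiniteMeasure X) (hP : Continuous P) (hUI : UnifIrred P)
    (μ : ProbabilityMeasure X)
    (hstat : (μ : Measure X).bind (fun v => (P v : Measure X)) = (μ : Measure X))
    {f : X → ℝ} (hf : Continuous f) (hfp : ∀ x, 0 < f x)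
    (hE : UniformEquicontinuous fun (k : ℕ) (u : X) =>
      (supN (opIter P k f))⁻¹ * opIter P k f u) :
    ∃ h : X → ℝ, Continuous h ∧ (∀ x, 0 < h x) ∧ (∀ u, opP P h u = h u) ∧
      (∫ x, h x ∂(μ : Measure X)) = 1 ∧
      ∃ c : ℝ, 0 < c ∧ ∃ φ : ℕ → ℕ, StrictMono φ ∧ (∀ j, 1 ≤ φ j) ∧
        TendstoUniformly
          (fun (j : ℕ) (u : X) =>
            c * ((φ j : ℝ)⁻¹ * ∑ l ∈ Finset.range (φ j), opIter P l f u))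
          h atTop := by
  have hI : 0 < ∫ x, f x ∂(μ : Measure X) := by
    rw [integral_pos_iff_support_of_nonneg (fun x => (hfp x).le) (integrable_cont _ hf)]
    have : Function.support f = Set.univ := Set.eq_univ_of_forall fun x => (hfp x).ne'
    rw [this]; simp
  obtain ⟨h, hc, h0, hfix, hint, φ, hφ, hφ1, hu⟩ :=
    avg_lim P hP hUI μ hstat hf (fun x => (hfp x).le) hI hE
  set I := ∫ x, f x ∂(μ : Measure X)
  have hv : ∃ v, 0 < h v := by
    by_contra hcon
    push Not at hcon
    have : ∫ x, h x ∂(μ : Measure X) ≤ 0 := integral_nonpos hcon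
    linarith
  obtain ⟨v, hv⟩ := hv
  have hpos := strict_pos P hP hUI hc h0 hfix hv
  refine ⟨fun x => I⁻¹ * h x, continuous_const.mul hc, fun x => mul_pos (inv_pos.2 hI) (hpos x),
    fun u => ?_, ?_, I⁻¹, inv_pos.2 hI, φ, hφ, hφ1, ?_⟩
  · have := hfix u
    unfold opP at this ⊢
    rw [integral_const_mul, this]
  · rw [integral_const_mul, hint, inv_mul_cancel₀ hI.ne']
  · exact (uniformContinuous_const_smul (I⁻¹ : ℝ)).comp_tendstoUniformly hu

/-- **Existence of a positive eigenfunction** (Step 3 of the proof of Theorem 3.1): under the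
uniform Feller and uniform irreducibility properties, if `𝔓*μ = μ` for `μ ∈ 𝒫(X)`, then there
is an everywhere positive `h ∈ C(X)` with `𝔓 h = h` and `⟨h,μ⟩ = 1`; moreover `h` can be
obtained, after a suitable normalisation, as a uniform limit point of the Cesàro averages
`k⁻¹ ∑_{l=0}^{k-1} 𝔓_l f` for any fixed `f` in the determining class. -/
theorem statement11 (P : X → FiniteMeasure X)
    (hFeller : Continuous P) (hnz : ∀ u, P u ≠ 0)
    (C : Set (X → ℝ))
    (hCpos : ∀ f ∈ C, Continuous f ∧ ∀ x, 0 < f x)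
    (hone : (fun _ : X => (1 : ℝ)) ∈ C)
    (hdet : Determining C)
    (hUF : UnifFeller P C)
    (hUI : UnifIrred P)
    (μ : ProbabilityMeasure X)
    (hstat : (μ : Measure X).bind (fun v => (P v : Measure X)) = (μ : Measure X)) :
    ∃ h : X → ℝ, Continuous h ∧ (∀ x, 0 < h x) ∧
      (∀ u, opP P h u = h u) ∧
      (∫ x, h x ∂(μ : Measure X)) = 1 ∧
      ∀ f ∈ C, ∃ c : ℝ, 0 < c ∧ ∃ φ : ℕ → ℕ, StrictMono φ ∧ (∀ j, 1 ≤ φ j) ∧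
        TendstoUniformly
          (fun (j : ℕ) (u : X) =>
            c * ((φ j : ℝ)⁻¹ * ∑ l ∈ Finset.range (φ j), opIter P l f u))
          h atTop := by

  obtain ⟨h, hc, hpos, hfix, hint, -⟩ := normalized P hFeller hUI μ hstat (hCpos _ hone).1
    (hCpos _ hone).2 (hUF _ hone)
  refine ⟨h, hc, hpos, hfix, hint, fun f hf => ?_⟩
  obtain ⟨g, gc, gpos, gfix, gint, hg⟩ := normalized P hFeller hUI μ hstat (hCpos _ hf).1
    (hCpos _ hf).2 (hUF _ hf)
  have := uniq P hFeller hUI μ gc hc hpos gfix hfix gint hint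
  subst this
  exact hg
end
end

section
/- Let X be a compact metric space, let 𝔓₁ be the Markov operator of a Feller Markov transition function on X (𝔓₁𝟏 = 𝟏, 𝔓₁ maps C(X) into C(X) and preserves non-negativity), and define J(σ) = −inf_{g ∈ C₊(X)} ⟨log(𝔓₁g/g), σ⟩ for σ ∈ 𝒫(X). Let V ∈ C(X), λ > 0 and h ∈ C₊(X) satisfy 𝔓₁(h e^V) = λh, set h̃ = h e^V (so that e^V 𝔓₁h̃ = λh̃), and suppose ν = hμ is the unique stationary measure of the Markov semigroup 𝒮₁^V g = λ^{-1} h^{-1} 𝔓₁(g h e^V) on C(X). Then for σ ∈ 𝒫(X) the infimum defining J(σ) is attained at the function g = h̃, i.e. J(σ) = −⟨log(𝔓₁h̃/h̃), σ⟩, if and only if σ = ν. -/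
open MeasureTheory Filter Topology
open scoped ENNReal NNReal

noncomputable section

variable {X : Type} [MetricSpace X] [CompactSpace X] [MeasurableSpace X] [BorelSpace X]

/-- The Markov operator `𝔓₁ f (u) = ∫ f dP(u,·)` of a Markov transition function. -/
def opP1 (P : X → ProbabilityMeasure X) (f : X → ℝ) (u : X) : ℝ :=
  ∫ v, f v ∂(P u : Measure X)

/-- The functional `J(σ) = -inf_{g ∈ C₊(X)} ⟨log (𝔓₁ g / g), σ⟩` (Donsker–Varadhan form of
the rate function, Lemma 4.1). -/
def DVfunctional (P : X → ProbabilityMeasure X) (σ : ProbabilityMeasure X) : EReal :=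
  -(⨅ g : {g : X → ℝ // Continuous g ∧ ∀ x, 0 < g x},
      ((∫ x, Real.log (opP1 P g.1 x / g.1 x) ∂(σ : Measure X) : ℝ) : EReal))


lemma aux_int (m : Measure X) [IsFiniteMeasure m] {f : X → ℝ} (hf : Continuous f) :
    Integrable f m :=
  hf.integrable_of_hasCompactSupport (HasCompactSupport.of_compactSpace f)

lemma aux_cont (P : X → ProbabilityMeasure X) (hP : Continuous P) {f : X → ℝ}
    (hf : Continuous f) : Continuous (opP1 P f) := by
  rw [continuous_iff_continuousAt]
  intro u
  exact (ProbabilityMeasure.tendsto_iff_forall_integral_tendsto.1 (hP.tendsto u))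
    (BoundedContinuousFunction.mkOfCompact ⟨f, hf⟩)

lemma aux_pos (P : X → ProbabilityMeasure X) {f : X → ℝ}
    (hf : Continuous f) (h0 : ∀ x, 0 < f x) (u : X) : 0 < opP1 P f u := by
  unfold opP1
  rw [integral_pos_iff_support_of_nonneg (fun x => (h0 x).le) (aux_int _ hf)]
  have : Function.support f = Set.univ := by
    ext x; simp [(h0 x).ne']
  rw [this]; simp

def opS (P : X → ProbabilityMeasure X) (V : X → ℝ) (lam : ℝ) (h : X → ℝ) (g : X → ℝ)
    (u : X) : ℝ :=
  lam⁻¹ * (h u)⁻¹ * opP1 P (fun x => g x * h x * Real.exp (V x)) u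

section
variable (P : X → ProbabilityMeasure X) (hFeller : Continuous P)
    (V : X → ℝ) (hV : Continuous V)
    (lam : ℝ) (hlam : 0 < lam)
    (h : X → ℝ) (hcont : Continuous h) (hpos : ∀ x, 0 < h x)
    (heig : ∀ u, opP1 P (fun x => h x * Real.exp (V x)) u = lam * h u)

include hFeller hV hcont hpos in
lemma opS_cont {g : X → ℝ} (hg : Continuous g) : Continuous (opS P V lam h g) := by
  unfold opS
  have h1 : Continuous (fun u => (h u)⁻¹) := hcont.inv₀ (fun x => (hpos x).ne')
  have h2 : Continuous (opP1 P (fun x => g x * h x * Real.exp (V x))) :=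
    aux_cont P hFeller (by fun_prop)
  fun_prop

include hV hlam hcont hpos in
lemma opS_pos {g : X → ℝ} (hg : Continuous g) (h0 : ∀ x, 0 < g x) (u : X) :
    0 < opS P V lam h g u := by
  unfold opS
  have h2 : 0 < opP1 P (fun x => g x * h x * Real.exp (V x)) u :=
    aux_pos P (by fun_prop) (fun x => by have := hpos x; have := h0 x; positivity) u
  have := hpos u
  positivity

include hV hlam hcont hpos in
lemma opS_mono {f g : X → ℝ} (hf : Continuous f) (hg : Continuous g)
    (hfg : ∀ x, f x ≤ g x) (u : X) :
    opS P V lam h f u ≤ opS P V lam h g u := by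
  unfold opS
  have := hpos u
  refine mul_le_mul_of_nonneg_left ?_ (by positivity)
  refine integral_mono (aux_int _ (by fun_prop)) (aux_int _ (by fun_prop)) (fun x => ?_)
  have := hpos x
  have := hfg x
  dsimp only
  gcongr

include hV hlam hcont hpos heig in
lemma opS_affine {g : X → ℝ} (hg : Continuous g) (a b : ℝ) (u : X) :
    opS P V lam h (fun x => a + b * g x) u = a + b * opS P V lam h g u := by
  have e : opP1 P (fun x => (a + b * g x) * h x * Real.exp (V x)) u
      = a * (lam * h u) + b * opP1 P (fun x => g x * h x * Real.exp (V x)) u := by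
    rw [← heig u]
    unfold opP1
    rw [← integral_const_mul, ← integral_const_mul, ← integral_add]
    · congr 1; ext x; ring
    · exact aux_int _ (by fun_prop)
    · exact aux_int _ (by fun_prop)
  unfold opS
  rw [e]
  have := (hpos u).ne'
  have := hlam.ne'
  field_simp

include hFeller hV hlam hcont hpos heig in
lemma opS_log {g : X → ℝ} (hg : Continuous g) (h0 : ∀ x, 0 < g x) (u : X) :
    opS P V lam h (fun x => Real.log (g x)) u ≤ Real.log (opS P V lam h g u) := by
  set c := opS P V lam h g u with hc
  have cpos : 0 < c := opS_pos P V hV lam hlam h hcont hpos hg h0 u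
  have hl : Continuous fun x => Real.log (g x) := hg.log (fun x => (h0 x).ne')
  have h1 := opS_mono P V hV lam hlam h hcont hpos hl
    (g := fun x => (Real.log c - 1) + c⁻¹ * g x) (by fun_prop) (fun x => by
      have h3 := Real.log_le_sub_one_of_pos (mul_pos (inv_pos.2 cpos) (h0 x))
      rw [Real.log_mul (inv_pos.2 cpos).ne' (h0 x).ne', Real.log_inv] at h3
      linarith) u
  rw [opS_affine P V hV lam hlam h hcont hpos heig hg, ← hc, inv_mul_cancel₀ cpos.ne'] at h1
  linarith

include hFeller hV hlam hcont hpos heig in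
lemma F_eq (σ : ProbabilityMeasure X) {f : X → ℝ} (hf : Continuous f) (h0 : ∀ x, 0 < f x) :
    ∫ x, Real.log (opP1 P (fun y => f y * h y * Real.exp (V y)) x
        / (f x * h x * Real.exp (V x))) ∂(σ : Measure X)
    = ∫ x, Real.log (opP1 P (fun y => h y * Real.exp (V y)) x / (h x * Real.exp (V x)))
        ∂(σ : Measure X)
      + (∫ x, Real.log (opS P V lam h f x) ∂(σ : Measure X)
        - ∫ x, Real.log (f x) ∂(σ : Measure X)) := by
  have hS := opS_cont P hFeller V hV lam h hcont hpos hf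
  have hSp := opS_pos P V hV lam hlam h hcont hpos hf h0
  have c1 : Continuous fun x => Real.log (opS P V lam h f x) := hS.log (fun x => (hSp x).ne')
  have c2 : Continuous fun x => Real.log (f x) := hf.log (fun x => (h0 x).ne')
  have c3 : Continuous fun x =>
      Real.log (opP1 P (fun y => h y * Real.exp (V y)) x / (h x * Real.exp (V x))) := by
    have : ∀ x, h x * Real.exp (V x) ≠ 0 := fun x => by have := hpos x; positivity
    refine Continuous.log (Continuous.div (aux_cont P hFeller (by fun_prop)) (by fun_prop) this)
      (fun x => ?_)
    rw [heig]
    have := hpos x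
    positivity
  rw [← integral_sub (aux_int _ c1) (aux_int _ c2),
    ← integral_add (aux_int _ c3) (aux_int _ (f := fun x => Real.log (opS P V lam h f x) - Real.log (f x)) (c1.sub c2))]
  congr 1
  ext x
  have a1 := hpos x
  have a2 := hSp x
  have a3 := h0 x
  rw [heig, ← Real.log_div a2.ne' a3.ne', ← Real.log_mul (by positivity) (by positivity)]
  congr 1
  unfold opS
  field_simp

include hFeller hV hlam hcont hpos heig in
lemma stat_ge (σ : ProbabilityMeasure X)
    (H : ∀ f : X → ℝ, Continuous f → (∀ x, 0 < f x) →
      ∫ x, Real.log (f x) ∂(σ : Measure X) ≤ ∫ x, Real.log (opS P V lam h f x) ∂(σ : Measure X))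
    {g : X → ℝ} (hg : Continuous g) :
    ∫ x, g x ∂(σ : Measure X) ≤ ∫ x, opS P V lam h g x ∂(σ : Measure X) := by
  obtain ⟨M0, hM0⟩ := isCompact_univ.exists_bound_of_continuousOn hg.continuousOn
  obtain ⟨M, hM, hgM⟩ : ∃ M : ℝ, 0 < M ∧ ∀ x, |g x| ≤ M :=
    ⟨max M0 1, by positivity, fun x => (hM0 x (Set.mem_univ x)).trans (le_max_left _ _)⟩
  have hS := opS_cont P hFeller V hV lam h hcont hpos hg
  have key : ∀ ε : ℝ, 0 < ε → ε * M ≤ 1 / 2 →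
      ∫ x, g x ∂(σ : Measure X) ≤ ∫ x, opS P V lam h g x ∂(σ : Measure X) + ε * (2 * M ^ 2) := by
    intro ε he heM
    have hb : ∀ x, |ε * g x| ≤ ε * M := fun x => by
      rw [abs_mul, abs_of_pos he]; exact mul_le_mul_of_nonneg_left (hgM x) he.le
    have fpos : ∀ x, 0 < 1 + ε * g x := fun x => by
      have := (abs_le.1 (hb x)).1; linarith
    have fc : Continuous fun x => 1 + ε * g x := by fun_prop
    have h1 := H _ fc fpos
    have hSc := opS_cont P hFeller V hV lam h hcont hpos fc
    have hSp := opS_pos P V hV lam hlam h hcont hpos fc fpos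
    have h2 : ∫ x, Real.log (opS P V lam h (fun x => 1 + ε * g x) x) ∂(σ : Measure X)
        ≤ ∫ x, ε * opS P V lam h g x ∂(σ : Measure X) := by
      refine integral_mono (aux_int _ (hSc.log (fun x => (hSp x).ne')))
        (aux_int _ (by fun_prop)) (fun x => ?_)
      have := Real.log_le_sub_one_of_pos (hSp x)
      rw [opS_affine P V hV lam hlam h hcont hpos heig hg] at this ⊢
      linarith
    have h3 : ∫ x, (ε * g x - 2 * (ε * M) ^ 2) ∂(σ : Measure X)
        ≤ ∫ x, Real.log (1 + ε * g x) ∂(σ : Measure X) := by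
      refine integral_mono (aux_int _ (by fun_prop))
        (aux_int _ (fc.log (fun x => (fpos x).ne'))) (fun x => ?_)
      dsimp only
      have h4 := Real.one_sub_inv_le_log_of_pos (fpos x)
      have h5 : (ε * g x) ^ 2 ≤ (ε * M) ^ 2 := sq_le_sq' (abs_le.1 (hb x)).1 (abs_le.1 (hb x)).2
      have h7 : -(1/2) ≤ ε * g x := by have := (abs_le.1 (hb x)).1; linarith
      have h6 : ε * g x - 2 * (ε * g x) ^ 2 ≤ 1 - (1 + ε * g x)⁻¹ := by
        have h8 := fpos x
        have : 1 - (1 + ε * g x)⁻¹ = (ε * g x) / (1 + ε * g x) := by field_simp; ring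
        rw [this, le_div_iff₀ h8]
        generalize ε * g x = y at *
        nlinarith [mul_nonneg (sq_nonneg y) (show 0 ≤ 1 + 2 * y by linarith)]
      linarith
    rw [integral_sub (aux_int _ (by fun_prop)) (integrable_const _), integral_const_mul] at h3
    rw [integral_const_mul] at h2
    simp only [integral_const, probReal_univ, one_smul] at h3
    have h9 : ε * ∫ x, g x ∂(σ : Measure X)
      ≤ ε * (∫ x, opS P V lam h g x ∂(σ : Measure X) + ε * (2 * M ^ 2)) := by nlinarith
    exact le_of_mul_le_mul_left h9 he
  refine le_of_forall_pos_le_add (fun δ hδ => ?_)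
  have hε : 0 < min (1 / (2 * M)) (δ / (2 * M ^ 2)) := by positivity
  have h1 := key _ hε (by
    calc _ ≤ 1 / (2 * M) * M := by gcongr; exact min_le_left _ _
      _ = 1 / 2 := by field_simp)
  have h2 : min (1 / (2 * M)) (δ / (2 * M ^ 2)) * (2 * M ^ 2) ≤ δ := by
    calc _ ≤ δ / (2 * M ^ 2) * (2 * M ^ 2) := by gcongr; exact min_le_right _ _
      _ = δ := by field_simp
  linarith
end

/-- **Lemma 4.3**: for a Feller Markov transition function `P` on a compact metric space, if
`𝔓₁(h e^V) = λ h` with `λ > 0`, `h ∈ C₊(X)`, and `ν = hμ` is the unique stationary measure of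
the Markov semigroup `𝒮₁^V g = λ⁻¹ h⁻¹ 𝔓₁(g h e^V)`, then the infimum defining `J(σ)` is
attained at `g = h̃ = h e^V` if and only if `σ = ν`. -/
theorem statement13 (P : X → ProbabilityMeasure X) (hFeller : Continuous P)
    (V : X → ℝ) (hV : Continuous V)
    (lam : ℝ) (hlam : 0 < lam)
    (h : X → ℝ) (hcont : Continuous h) (hpos : ∀ x, 0 < h x)
    (heig : ∀ u, opP1 P (fun x => h x * Real.exp (V x)) u = lam * h u)
    (μ : Measure X) [IsFiniteMeasure μ]
    (hnorm : (∫ x, h x ∂μ) = 1)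
    (hprob : IsProbabilityMeasure (μ.withDensity fun x => ENNReal.ofReal (h x)))
    (hstat : ∀ g : X → ℝ, Continuous g →
      (∫ u, lam⁻¹ * (h u)⁻¹ * opP1 P (fun x => g x * h x * Real.exp (V x)) u
          ∂(μ.withDensity fun x => ENNReal.ofReal (h x)))
        = ∫ u, g u ∂(μ.withDensity fun x => ENNReal.ofReal (h x)))
    (huniq : ∀ ν' : ProbabilityMeasure X,
      (∀ g : X → ℝ, Continuous g →
        (∫ u, lam⁻¹ * (h u)⁻¹ * opP1 P (fun x => g x * h x * Real.exp (V x)) u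
            ∂(ν' : Measure X))
          = ∫ u, g u ∂(ν' : Measure X)) →
      (ν' : Measure X) = μ.withDensity fun x => ENNReal.ofReal (h x)) :
    ∀ σ : ProbabilityMeasure X,
      (DVfunctional P σ
          = -((∫ x, Real.log
                (opP1 P (fun y => h y * Real.exp (V y)) x / (h x * Real.exp (V x)))
                ∂(σ : Measure X) : ℝ) : EReal))
        ↔ (σ : Measure X) = μ.withDensity fun x => ENNReal.ofReal (h x) := by
  intro σ
  have hc2 : Continuous fun x => h x * Real.exp (V x) := by fun_prop
  have hp2 : ∀ x, 0 < h x * Real.exp (V x) := fun x => by have := hpos x; positivity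
  have step1 : (DVfunctional P σ
          = -((∫ x, Real.log
                (opP1 P (fun y => h y * Real.exp (V y)) x / (h x * Real.exp (V x)))
                ∂(σ : Measure X) : ℝ) : EReal)) ↔
      ∀ f : X → ℝ, Continuous f → (∀ x, 0 < f x) →
      ∫ x, Real.log (f x) ∂(σ : Measure X)
        ≤ ∫ x, Real.log (opS P V lam h f x) ∂(σ : Measure X) := by
    unfold DVfunctional
    rw [neg_inj]
    constructor
    · intro he f hf h0
      have h1 := he.symm.le.trans (iInf_le _
        (⟨fun x => f x * h x * Real.exp (V x),
          by fun_prop, fun x => by have := hpos x; have := h0 x; positivity⟩ :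
          {g : X → ℝ // Continuous g ∧ ∀ x, 0 < g x}))
      rw [EReal.coe_le_coe_iff] at h1
      have h2 := F_eq P hFeller V hV lam hlam h hcont hpos heig σ hf h0
      dsimp only at h1
      linarith
    · intro H
      refine le_antisymm (iInf_le _ (⟨fun x => h x * Real.exp (V x), hc2, hp2⟩ :
          {g : X → ℝ // Continuous g ∧ ∀ x, 0 < g x}))
        (le_iInf fun ⟨g, hg, g0⟩ => ?_)
      rw [EReal.coe_le_coe_iff]
      dsimp only
      have hf : Continuous fun x => g x / (h x * Real.exp (V x)) :=
        hg.div hc2 (fun x => (hp2 x).ne')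
      have h0 : ∀ x, 0 < g x / (h x * Real.exp (V x)) := fun x => div_pos (g0 x) (hp2 x)
      have h2 := F_eq P hFeller V hV lam hlam h hcont hpos heig σ hf h0
      have h1 := H _ hf h0
      have e : ∀ x, g x / (h x * Real.exp (V x)) * h x * Real.exp (V x) = g x := fun x => by
        rw [mul_assoc, div_mul_cancel₀ _ (hp2 x).ne']
      simp only [e] at h2
      linarith
  rw [step1]
  constructor
  · intro H
    apply huniq σ
    intro g hg
    refine le_antisymm ?_ (stat_ge P hFeller V hV lam hlam h hcont hpos heig σ H hg)
    have h1 := stat_ge P hFeller V hV lam hlam h hcont hpos heig σ H (g := fun x => 0 + (-1) * g x)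
      (by fun_prop)
    simp only [opS_affine P V hV lam hlam h hcont hpos heig hg] at h1
    simp only [zero_add, integral_const_mul] at h1
    change ∫ u, opS P V lam h g u ∂(σ : Measure X) ≤ _
    linarith
  · intro he f hf h0
    have hl : Continuous fun x => Real.log (f x) := hf.log (fun x => (h0 x).ne')
    have h1 := hstat _ hl
    rw [← he] at h1
    rw [← h1]
    refine integral_mono (aux_int _ (opS_cont P hFeller V hV lam h hcont hpos hl))
      (aux_int _ ((opS_cont P hFeller V hV lam h hcont hpos hf).log
        (fun x => (opS_pos P V hV lam hlam h hcont hpos hf h0 x).ne'))) (fun u => ?_)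
    exact opS_log P hFeller V hV lam hlam h hcont hpos heig hf h0 u
end
end
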